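/- Let (G,κ) be a capacitated graph with κ(x) ≤ d_G(x) for all x, with X, Y, Z defined as above and X ∪ Z independent. If every DP-Nash subgraph of (G,κ) has D-set equal to X ∪ Z, then for every vertex y ∈ Y one has |N_G(y) ∩ X| ≥ κ(y) + 1. -/

import Mathlib

open Finset
open scoped Classical

noncomputable section

variable {V : Type*} [Fintype V]

/-- Degree of a vertex in a (simple) graph on a finite vertex set. -/
def deg (H : SimpleGraph V) (x : V) : ℕ :=
  (Finset.univ.filter fun y => H.Adj x y).card

/-- `(D, P; H)` is a DP-Nash subgraph of the capacitated graph `(G, κ)`: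
`H` is a spanning subgraph of `G`, bipartite with partite sets `D` and `P`,
no vertex of `P` is isolated in `H`, and every `x ∈ D` has
`H`-degree `min (d_G x) (κ x)`. -/
def IsDPNash (G : SimpleGraph V) (κ : V → ℕ) (D P : Finset V) (H : SimpleGraph V) : Prop :=
  H ≤ G ∧ D ∪ P = Finset.univ ∧ Disjoint D P ∧
    (∀ ⦃u v⦄, H.Adj u v → (u ∈ D ∧ v ∈ P) ∨ (u ∈ P ∧ v ∈ D)) ∧
    (∀ v ∈ P, 0 < deg H v) ∧
    (∀ x ∈ D, deg H x = min (deg G x) (κ x))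

/-- `X = {x : κ(x) = d_G(x)}`. -/
def XX (G : SimpleGraph V) (κ : V → ℕ) : Finset V :=
  Finset.univ.filter fun x => κ x = deg G x

/-- `Y = N(X) \ X`. -/
def YY (G : SimpleGraph V) (κ : V → ℕ) : Finset V :=
  Finset.univ.filter fun y => y ∉ XX G κ ∧ ∃ x ∈ XX G κ, G.Adj x y

/-- `Z = V \ (X ∪ Y)`. -/
def ZZ (G : SimpleGraph V) (κ : V → ℕ) : Finset V :=
  Finset.univ \ (XX G κ ∪ YY G κ)

/-- `Y^{κ>0} = {y ∈ Y : κ(y) > 0}`. -/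
def Ypos (G : SimpleGraph V) (κ : V → ℕ) : Finset V :=
  (YY G κ).filter fun y => 0 < κ y

/-- The neighbours of `x` in `G` lying in `W`. -/
def nbrW (G : SimpleGraph V) (x : V) (W : Finset V) : Finset V :=
  Finset.univ.filter fun y => G.Adj x y ∧ y ∈ W

/-- `L(W) = {x ∈ X ∪ Z : |N_G(x) ∩ W| > d_G(x) - κ(x)}`. -/
def LL (G : SimpleGraph V) (κ : V → ℕ) (W : Finset V) : Finset V :=
  (XX G κ ∪ ZZ G κ).filter fun x => deg G x - κ x < (nbrW G x W).card

/-- A greedy partial solution: `D ⊆ R`, each `x ∈ D` serves exactly `κ x` neighbours in `A \ D`,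
and every vertex of `R \ D` is served. -/
def Sol (G : SimpleGraph V) (κ : V → ℕ) (A R D : Finset V) (f : V → Finset V) : Prop :=
  D ⊆ R ∧ (∀ x ∈ D, (∀ u ∈ f x, u ∈ A ∧ u ∉ D ∧ G.Adj x u) ∧ (f x).card = κ x) ∧
    ∀ v ∈ R, v ∉ D → ∃ x ∈ D, v ∈ f x

theorem Sol.step (G : SimpleGraph V) (κ : V → ℕ) (A R D T : Finset V) (f : V → Finset V) (v : V)
    (hv : v ∈ R) (hT : ∀ u ∈ T, u ∈ A ∧ G.Adj v u) (hc : T.card = κ v)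
    (h : Sol G κ (A.erase v) ((R.erase v) \ T) D f) :
    Sol G κ A R (insert v D) (Function.update f v T) := by
  obtain ⟨h1, h2, h3⟩ := h
  have hvT : v ∉ T := fun h => G.loopless.irrefl v (hT v h).2
  have hvD : v ∉ D := fun h => by simpa using h1 h
  have hDT : ∀ x ∈ D, x ∉ T ∧ x ∈ R ∧ x ≠ v := fun x hx => by
    have := h1 hx
    simp at this
    tauto
  refine ⟨?_, ?_, ?_⟩
  · intro x hx
    rcases Finset.mem_insert.1 hx with rfl | hx
    · exact hv
    · exact (hDT x hx).2.1
  · intro x hx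
    by_cases hxv : x = v
    · subst hxv
      simp only [Function.update_self]
      refine ⟨fun u hu => ⟨(hT u hu).1, ?_, (hT u hu).2⟩, hc⟩
      intro hu'
      rcases Finset.mem_insert.1 hu' with rfl | hu'
      · exact hvT hu
      · exact (hDT u hu').1 hu
    · have hxD : x ∈ D := by simpa [hxv] using hx
      rw [Function.update_of_ne hxv]
      refine ⟨fun u hu => ?_, (h2 x hxD).2⟩
      obtain ⟨a, b, c⟩ := (h2 x hxD).1 u hu
      simp at a
      simp [a, b, c]
  · intro u hu huD
    simp at huD
    by_cases huT : u ∈ T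
    · exact ⟨v, by simp, by simpa using huT⟩
    · obtain ⟨x, hx, hux⟩ := h3 u (by simp [hu, huD, huT]) huD.2
      refine ⟨x, by simp [hx], ?_⟩
      rwa [Function.update_of_ne (hDT x hx).2.2]

theorem erase_bound (G : SimpleGraph V) (κ : V → ℕ) (A : Finset V) (u v : V)
    (h : κ u ≤ (A.filter fun w => G.Adj u w).card)
    (h' : G.Adj u v → κ u ≠ (A.filter fun w => G.Adj u w).card) :
    κ u ≤ ((A.erase v).filter fun w => G.Adj u w).card := by
  rw [Finset.filter_erase]
  by_cases ha : G.Adj u v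
  · have := h' ha
    have := Finset.pred_card_le_card_erase (s := A.filter fun w => G.Adj u w) (a := v)
    omega
  · rwa [Finset.erase_eq_of_notMem (by simp [ha])]

theorem exists_sol (G : SimpleGraph V) (κ : V → ℕ) (n : ℕ) : ∀ (A R : Finset V), R.card = n → R ⊆ A →
    (∀ u ∈ R, κ u ≤ (A.filter fun w => G.Adj u w).card) → ∃ D f, Sol G κ A R D f := by
  induction n using Nat.strong_induction_on with
  | _ n ih =>
  intro A R hn hRA hb
  by_cases hR : R = ∅
  · subst hR
    exact ⟨∅, fun _ => ∅, by simp [Sol]⟩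
  have key : ∃ v ∈ R, ∃ T : Finset V, (∀ u ∈ T, u ∈ A ∧ G.Adj v u) ∧ T.card = κ v ∧
      ∀ u ∈ R, u ∉ T → G.Adj u v → κ u ≠ (A.filter fun w => G.Adj u w).card := by
    by_cases he : ∃ v ∈ R, κ v = (A.filter fun w => G.Adj v w).card
    · obtain ⟨v, hv, he⟩ := he
      refine ⟨v, hv, A.filter fun w => G.Adj v w, by simp, he.symm, ?_⟩
      intro u hu hT ha
      exact absurd (by simp [hRA hu, ha.symm]) hT
    · push Not at he
      obtain ⟨v, hv⟩ := Finset.nonempty_iff_ne_empty.2 hR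
      obtain ⟨T, hT, hc⟩ := Finset.exists_subset_card_eq (hb v hv)
      exact ⟨v, hv, T, fun u hu => by simpa using hT hu, hc, fun u hu _ _ => he u hu⟩
  obtain ⟨v, hv, T, hT, hc, hk⟩ := key
  obtain ⟨D, f, h⟩ := ih ((R.erase v) \ T).card (by
      rw [← hn]
      exact lt_of_le_of_lt (Finset.card_le_card Finset.sdiff_subset) (Finset.card_erase_lt_of_mem hv))
    (A.erase v) ((R.erase v) \ T) rfl
    (Finset.sdiff_subset.trans (Finset.erase_subset_erase v hRA)) (by
      intro u hu
      simp at hu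
      exact erase_bound G κ A u v (hb u hu.1.2) (hk u hu.1.2 hu.2))
  exact ⟨_, _, Sol.step G κ A R D T f v hv hT hc h⟩

theorem Sol.nash (G : SimpleGraph V) (κ : V → ℕ) (hκ : ∀ v, κ v ≤ deg G v) (D : Finset V)
    (f : V → Finset V) (h : Sol G κ univ univ D f) : ∃ H, IsDPNash G κ D Dᶜ H := by
  obtain ⟨-, h2, h3⟩ := h
  let H : SimpleGraph V :=
    { Adj := fun u v => (u ∈ D ∧ v ∈ f u) ∨ (v ∈ D ∧ u ∈ f v)
      symm := ⟨fun u v h => h.symm⟩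
      loopless := ⟨fun u h => by
        have : u ∈ D ∧ u ∈ f u := by tauto
        exact ((h2 u this.1).1 u this.2).2.1 this.1⟩ }
  refine ⟨H, ?_, by simp, disjoint_compl_right, ?_, ?_, ?_⟩
  · rintro u v (⟨a, b⟩ | ⟨a, b⟩)
    · exact ((h2 _ a).1 _ b).2.2
    · exact ((h2 _ a).1 _ b).2.2.symm
  · rintro u v (⟨a, b⟩ | ⟨a, b⟩)
    · exact Or.inl ⟨a, by simpa using ((h2 _ a).1 _ b).2.1⟩
    · exact Or.inr ⟨by simpa using ((h2 _ a).1 _ b).2.1, a⟩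
  · intro v hv
    obtain ⟨x, hx, hvx⟩ := h3 v (by simp) (by simpa using hv)
    exact Finset.card_pos.2 ⟨x, by simp only [Finset.mem_filter, Finset.mem_univ, true_and]; exact Or.inr ⟨hx, hvx⟩⟩
  · intro x hx
    rw [min_eq_right (hκ x), ← (h2 x hx).2]
    unfold deg
    congr 1
    ext u
    simp only [Finset.mem_filter, Finset.mem_univ, true_and]
    constructor
    · rintro (⟨-, b⟩ | ⟨a, b⟩)
      · exact b
      · exact absurd hx ((h2 _ a).1 _ b).2.1
    · exact fun h => Or.inl ⟨hx, h⟩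

/-- If every DP-Nash subgraph of `(G,κ)` has `D`-set `X ∪ Z`, then every
`y ∈ Y` satisfies `|N_G(y) ∩ X| ≥ κ y + 1`. -/
theorem stmt6 (G : SimpleGraph V) (κ : V → ℕ) (hκ : ∀ v, κ v ≤ deg G v)
    (hedge : ∀ u v, G.Adj u v → 0 < κ u ∨ 0 < κ v)
    (hind : ∀ u ∈ XX G κ ∪ ZZ G κ, ∀ v ∈ XX G κ ∪ ZZ G κ, ¬ G.Adj u v)
    (huniq : ∀ (D P : Finset V) (H : SimpleGraph V),
      IsDPNash G κ D P H → D = XX G κ ∪ ZZ G κ) :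
    ∀ y ∈ YY G κ, κ y + 1 ≤ (nbrW G y (XX G κ)).card := by
  intro y hy
  by_contra hlt
  have hle : (nbrW G y (XX G κ)).card ≤ κ y := by omega
  obtain ⟨T, hXT, hTN, hc⟩ := Finset.exists_subsuperset_card_eq
    (s := nbrW G y (XX G κ)) (t := Finset.univ.filter fun w => G.Adj y w)
    (by intro u hu; simp [nbrW] at hu; simp [hu]) hle (hκ y)
  obtain ⟨D, f, h⟩ := exists_sol G κ _ (univ.erase y) ((univ.erase y) \ T) rfl
    Finset.sdiff_subset (by
      intro u hu
      refine erase_bound G κ univ u y (hκ u) fun ha he => ?_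
      have : u ∈ nbrW G y (XX G κ) := by
        simp only [nbrW, XX, Finset.mem_filter, Finset.mem_univ, true_and]
        exact ⟨ha.symm, he⟩
      exact (Finset.mem_sdiff.1 hu).2 (hXT this))
  obtain ⟨H, hH⟩ := Sol.nash G κ hκ _ _ (Sol.step G κ univ univ D T f y (by simp)
    (fun u hu => by simpa using hTN hu) hc h)
  have hmem : y ∈ XX G κ ∪ ZZ G κ := by
    rw [← huniq _ _ _ hH]
    simp
  have hyX : y ∉ XX G κ := by
    have := hy
    simp only [YY, Finset.mem_filter] at this
    exact this.2.1
  simp [ZZ, hy, hyX] at hmem
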